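/- arXiv:2306.11522 — 3 statements merged into one kernel-verified Lean document; each statement's English description precedes it below -/
import Mathlib

section
/- Let F be a finite family of pairwise disjoint convex bodies contained in an axis-parallel closed rectangle R in ℝ², and let C ∈ F. Define the visibility region V(C) as the set of all points p ∈ R for which there exists a point q ∈ ∂C such that the closed segment [p,q] does not intersect the interior of any member of F. Then V(C) is nonempty and path-connected. -/
/-! Points of `∂C` see themselves, so `∂C` lies in the visibility region. A point `p` that sees
`q ∈ ∂C` is joined to `q` by the segment `[p, q]`, all of whose points see `q` too. Hence the region
is path-connected as soon as `∂C` is, and a homeomorphism of the whole space carries `∂C` to the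
unit sphere. -/

open Set Metric ENNReal

noncomputable section

abbrev E2 := EuclideanSpace ℝ (Fin 2)

/-- A convex body in the plane: a compact convex set with nonempty interior. -/
def IsConvexBody (C : Set E2) : Prop :=
  Convex ℝ C ∧ IsCompact C ∧ (interior C).Nonempty

/-- The closed axis-parallel rectangle `[a,b] × [c,d]`. -/
def Rect (a b c d : ℝ) : Set E2 := {p | p 0 ∈ Icc a b ∧ p 1 ∈ Icc c d}

/-- The visibility region of `C` inside the rectangle `R`, with respect to the
family `F` of obstacles: points `p ∈ R` that see some boundary point of `C`. -/
def VisIn (F : Set (Set E2)) (R : Set E2) (C : Set E2) : Set E2 :=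
  {p | p ∈ R ∧ ∃ q ∈ frontier C, ∀ D ∈ F, Disjoint (segment ℝ p q) (interior D)}

section Visibility

variable {E : Type*} [AddCommGroup E] [Module ℝ E] [TopologicalSpace E]

/-- Mutual visibility of `p` and `q` among the obstacles `F`: the segment `[p, q]` may touch the
obstacles but must avoid their interiors. -/
def MutuallyVisible (F : Set (Set E)) (p q : E) : Prop :=
  ∀ D ∈ F, Disjoint (segment ℝ p q) (interior D)

/-- The visibility region of `C` inside `R` among the obstacles `F`, in any real topological vector
space; `VisIn` is the case of the plane. -/
def visibilityRegion (F : Set (Set E)) (R C : Set E) : Set E :=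
  {p | p ∈ R ∧ ∃ q ∈ frontier C, MutuallyVisible F p q}

variable {F : Set (Set E)} {R C : Set E} {p q : E}

theorem mutuallyVisible_self_iff : MutuallyVisible F q q ↔ ∀ D ∈ F, q ∉ interior D := by
  simp only [MutuallyVisible, segment_same, disjoint_singleton_left]

theorem MutuallyVisible.of_mem_segment {x : E} (h : MutuallyVisible F p q)
    (hx : x ∈ segment ℝ p q) : MutuallyVisible F x q := fun D hD =>
  (h D hD).mono_left ((convex_segment p q).segment_subset hx (right_mem_segment ℝ p q))

theorem frontier_subset_visibilityRegion (hCR : frontier C ⊆ R)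
    (hCF : ∀ D ∈ F, Disjoint (frontier C) (interior D)) :
    frontier C ⊆ visibilityRegion F R C := fun q hq =>
  ⟨hCR hq, q, hq, mutuallyVisible_self_iff.2 fun D hD => disjoint_left.1 (hCF D hD) hq⟩

theorem segment_subset_visibilityRegion (hR : Convex ℝ R) (hp : p ∈ R) (hqR : q ∈ R)
    (hqC : q ∈ frontier C) (h : MutuallyVisible F p q) :
    segment ℝ p q ⊆ visibilityRegion F R C := fun _ hx =>
  ⟨hR.segment_subset hp hqR hx, q, hqC, h.of_mem_segment hx⟩

theorem isPathConnected_visibilityRegion [ContinuousAdd E] [ContinuousSMul ℝ E]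
    (hR : Convex ℝ R) (hCR : frontier C ⊆ R)
    (hCF : ∀ D ∈ F, Disjoint (frontier C) (interior D)) (hC : IsPathConnected (frontier C)) :
    IsPathConnected (visibilityRegion F R C) := by
  have hsub : frontier C ⊆ visibilityRegion F R C := frontier_subset_visibilityRegion hCR hCF
  obtain ⟨q₀, hq₀, hjoin⟩ := hC
  refine ⟨q₀, hsub hq₀, ?_⟩
  rintro p ⟨hp, q, hq, hpq⟩
  have joined_frontier : JoinedIn (visibilityRegion F R C) q₀ q := (hjoin hq).mono hsub
  have joined_segment : JoinedIn (visibilityRegion F R C) p q :=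
    .of_segment_subset (segment_subset_visibilityRegion hR hp (hCR hq) hq hpq)
  exact joined_frontier.trans joined_segment.symm

end Visibility

theorem disjoint_frontier_interior_of_pairwise_disjoint {X : Type*} [TopologicalSpace X]
    {F : Set (Set X)} (hF : F.Pairwise Disjoint) {C D : Set X} (hC : C ∈ F) (hD : D ∈ F)
    (hclosed : IsClosed C) : Disjoint (frontier C) (interior D) := by
  rcases eq_or_ne C D with rfl | hne
  · exact disjoint_interior_frontier.symm
  · exact (hF hC hD hne).mono hclosed.frontier_subset interior_subset

section NormedSpace

variable {E : Type*} [NormedAddCommGroup E] [NormedSpace ℝ E]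

theorem isPathConnected_frontier_of_convex (hE : 1 < Module.rank ℝ E) {C : Set E}
    (hC : Convex ℝ C) (hint : (interior C).Nonempty) (hbdd : Bornology.IsBounded C) :
    IsPathConnected (frontier C) := by
  obtain ⟨e, -, -, he⟩ :=
    exists_homeomorph_image_interior_closure_frontier_eq_unitBall hC hint hbdd
  rw [← e.isPathConnected_image, he]
  exact isPathConnected_sphere hE 0 zero_le_one

theorem visibility_region_nonempty_pathConnected_general (hE : 1 < Module.rank ℝ E)
    {F : Set (Set E)} {R C : Set E} (hC : Convex ℝ C) (hint : (interior C).Nonempty)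
    (hbdd : Bornology.IsBounded C) (hR : Convex ℝ R) (hCR : frontier C ⊆ R)
    (hCF : ∀ D ∈ F, Disjoint (frontier C) (interior D)) :
    (visibilityRegion F R C).Nonempty ∧ IsPathConnected (visibilityRegion F R C) :=
  have hV := isPathConnected_visibilityRegion hR hCR hCF
    (isPathConnected_frontier_of_convex hE hC hint hbdd)
  ⟨hV.nonempty, hV⟩

end NormedSpace

theorem one_lt_rank_E2 : 1 < Module.rank ℝ E2 :=
  Module.one_lt_rank_of_one_lt_finrank (by simp)

theorem convex_rect (a b c d : ℝ) : Convex ℝ (Rect a b c d) :=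
  fun _ hx _ hy _ _ hs ht hst =>
    ⟨convex_Icc a b hx.1 hy.1 hs ht hst, convex_Icc c d hx.2 hy.2 hs ht hst⟩

/-- The visibility region of a convex body, among finitely many pairwise disjoint
convex bodies inside an axis-parallel rectangle, is nonempty and path-connected. -/
theorem visibility_region_nonempty_pathConnected
    (F : Set (Set E2)) (hfin : F.Finite)
    (hbody : ∀ C ∈ F, IsConvexBody C)
    (hdisj : F.Pairwise Disjoint)
    (a b c d : ℝ) (hab : a < b) (hcd : c < d)
    (hsub : ∀ C ∈ F, C ⊆ Rect a b c d)
    (C : Set E2) (hC : C ∈ F) :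
    (VisIn F (Rect a b c d) C).Nonempty ∧ IsPathConnected (VisIn F (Rect a b c d) C) := by
  obtain ⟨hconv, hcomp, hint⟩ := hbody C hC
  exact visibility_region_nonempty_pathConnected_general one_lt_rank_E2 hconv hint hcomp.isBounded
    (convex_rect a b c d) (hcomp.isClosed.frontier_subset.trans (hsub C hC))
    fun _ hD => disjoint_frontier_interior_of_pairwise_disjoint hdisj hC hD hcomp.isClosed

end
end

section
/- For every Δ > 0 there exists a family F of six pairwise disjoint closed axis-parallel unit squares in ℝ² such that: (i) the diameter of the convex hull of the union of F is at most 10; (ii) there exists a point p ∈ ℝ² from which every square of F can be seen; and (iii) every point p from which every square of F can be seen lies at Euclidean distance at least Δ from the convex hull of the union of F. -/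
/-!
Four unit squares sit at the corners of a quincunx around a central one; the central square is
separated from the rows above and below it by slits of height `ε`. Let `p` lie at height at least
`0` and not too far away. A line of sight from `p` to the lower left square cannot be nearly
horizontal, so it moves very little sideways inside a slit. On leaving the lower row it is therefore
still to the left of the right edge of the central square and has to pass that square on the left;
for the same reason it then passes the upper left square on the left. Hence `p 0 < 0`. By symmetry,
seeing the lower right square forces `0 < p 0`, so no point within distance of order `1 / ε` sees
both. On the other hand, the point `(1 / ε, 0)` looks through both slits.

These five squares alone suffice; the sixth is placed at `(2, 3)`, where it obstructs nothing.
-/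

open Set Metric ENNReal

noncomputable section

/-- The closed axis-parallel unit square `[a,a+1] × [b,b+1]`. -/
def UnitSq (a b : ℝ) : Set E2 := {p | p 0 ∈ Icc a (a + 1) ∧ p 1 ∈ Icc b (b + 1)}

/-- With respect to the obstacle family `F`, the body `C` can be seen from `p`:
there is a boundary point `q` of `C` such that the closed segment `[p,q]`
misses the interior of every member of `F`. -/
def CanSee (F : Set (Set E2)) (p : E2) (C : Set E2) : Prop :=
  ∃ q ∈ frontier C, ∀ D ∈ F, Disjoint (segment ℝ p q) (interior D)

section Visibility

variable {F G : Set (Set E2)} {p : E2} {C : Set E2}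

theorem CanSee.anti (hFG : F ⊆ G) (h : CanSee G p C) : CanSee F p C :=
  let ⟨q, hq, hpq⟩ := h
  ⟨q, hq, fun D hD => hpq D (hFG hD)⟩

theorem canSee_iff_exists_mem (hC : IsClosed C) (hCF : C ∈ F) :
    CanSee F p C ↔ ∃ q ∈ C, ∀ D ∈ F, Disjoint (segment ℝ p q) (interior D) := by
  refine ⟨fun ⟨q, hq, hpq⟩ => ⟨q, hC.frontier_subset hq, hpq⟩, fun ⟨q, hq, hpq⟩ => ⟨q, ?_, hpq⟩⟩
  exact ⟨subset_closure hq, disjoint_left.1 (hpq C hCF) (right_mem_segment ℝ p q)⟩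

theorem CanSee.image (e : E2 ≃L[ℝ] E2) (h : CanSee F p C) :
    CanSee (image e '' F) (e p) (e '' C) := by
  obtain ⟨q, hq, hpq⟩ := h
  refine ⟨e q, ?_, forall_mem_image.2 fun D hD => ?_⟩
  · exact e.toHomeomorph.image_frontier C ▸ mem_image_of_mem e hq
  · have hseg : segment ℝ (e p) (e q) = e '' segment ℝ p q :=
      (image_segment ℝ e.toLinearEquiv.toLinearMap.toAffineMap p q).symm
    have hint : interior (e '' D) = e '' interior D := (e.toHomeomorph.image_interior D).symm
    rw [hseg, hint, disjoint_image_iff e.injective]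
    exact hpq D hD

end Visibility

section Hull

variable {E : Type*} [NormedAddCommGroup E] [NormedSpace ℝ E] {s : Set E} {r : ℝ}

theorem diam_convexHull_le_of_subset_closedBall (hr : 0 ≤ r) (hs : s ⊆ closedBall 0 r) :
    diam (convexHull ℝ s) ≤ 2 * r :=
  (diam_mono (convexHull_min hs (convex_closedBall 0 r)) isBounded_closedBall).trans
    (diam_closedBall hr)

theorem sub_le_infDist_convexHull_of_subset_closedBall (hne : s.Nonempty)
    (hs : s ⊆ closedBall 0 r) (p : E) : ‖p‖ - r ≤ infDist p (convexHull ℝ s) := by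
  refine (le_infDist hne.convexHull).2 fun z hz => ?_
  have hzr : ‖z‖ ≤ r := mem_closedBall_zero_iff.1 (convexHull_min hs (convex_closedBall 0 r) hz)
  have := norm_sub_norm_le p z
  rw [dist_eq_norm]
  linarith

end Hull

section Squares

/-- The closed axis-parallel unit square centred at `(x, y)`; centring makes reflections in the
coordinate axes act on squares by sign changes. -/
def squareAt (x y : ℝ) : Set E2 := UnitSq (x - 1 / 2) (y - 1 / 2)

variable {x y x' y' : ℝ} {p q : E2}

theorem mem_squareAt : p ∈ squareAt x y ↔ |p 0 - x| ≤ 1 / 2 ∧ |p 1 - y| ≤ 1 / 2 := by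
  simp only [squareAt, UnitSq, mem_ofPred_eq, mem_Icc, abs_le]
  constructor <;> rintro ⟨⟨_, _⟩, _, _⟩ <;> refine ⟨⟨?_, ?_⟩, ?_, ?_⟩ <;> linarith

theorem isClosed_squareAt (x y : ℝ) : IsClosed (squareAt x y) :=
  (isClosed_Icc.preimage (by fun_prop : Continuous fun p : E2 => p 0)).inter
    (isClosed_Icc.preimage (by fun_prop : Continuous fun p : E2 => p 1))

theorem mem_interior_squareAt :
    p ∈ interior (squareAt x y) ↔ |p 0 - x| < 1 / 2 ∧ |p 1 - y| < 1 / 2 := by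
  have hcont (i : Fin 2) : Continuous fun p : E2 => p i := by fun_prop
  have hopen (i : Fin 2) : IsOpenMap fun p : E2 => p i :=
    (EuclideanSpace.proj (𝕜 := ℝ) i).isOpenMap fun t => ⟨WithLp.toLp 2 fun _ => t, rfl⟩
  have hinter : squareAt x y = (fun p : E2 => p 0) ⁻¹' Icc (x - 1 / 2) (x - 1 / 2 + 1) ∩
      (fun p : E2 => p 1) ⁻¹' Icc (y - 1 / 2) (y - 1 / 2 + 1) := rfl
  rw [hinter, interior_inter, ← (hopen 0).preimage_interior_eq_interior_preimage (hcont 0),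
    ← (hopen 1).preimage_interior_eq_interior_preimage (hcont 1), interior_Icc, interior_Icc]
  simp only [mem_inter_iff, mem_preimage, mem_Ioo, abs_lt]
  constructor <;> rintro ⟨⟨_, _⟩, _, _⟩ <;> refine ⟨⟨?_, ?_⟩, ?_, ?_⟩ <;> linarith

theorem disjoint_squareAt (h : 1 < |x - x'| ∨ 1 < |y - y'|) :
    Disjoint (squareAt x y) (squareAt x' y') := by
  refine disjoint_left.2 fun p hp hp' => ?_
  obtain ⟨hx, hy⟩ := mem_squareAt.1 hp
  obtain ⟨hx', hy'⟩ := mem_squareAt.1 hp'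
  have hxx' := abs_sub_le x (p 0) x'
  have hyy' := abs_sub_le y (p 1) y'
  rw [abs_sub_comm] at hx hy
  rcases h with h | h <;> linarith

/-- The left-hand sides of `hp` and `hq` are the maximum of the functional `α X + β Y` over the
square. -/
theorem disjoint_segment_interior_squareAt {α β : ℝ} (hαβ : 0 < |α| + |β|)
    (hp : α * x + β * y + (|α| + |β|) / 2 ≤ α * p 0 + β * p 1)
    (hq : α * x + β * y + (|α| + |β|) / 2 ≤ α * q 0 + β * q 1) :
    Disjoint (segment ℝ p q) (interior (squareAt x y)) := by
  have hlin : IsLinearMap ℝ fun z : E2 => α * z 0 + β * z 1 :=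
    ⟨fun z w => by simp only [PiLp.add_apply]; ring,
      fun t z => by simp only [PiLp.smul_apply, smul_eq_mul]; ring⟩
  refine disjoint_left.2 fun z hz hz' => ?_
  have hge := (convex_halfSpace_ge hlin _).segment_subset hp hq hz
  obtain ⟨hx, hy⟩ := mem_interior_squareAt.1 hz'
  have hlt : α * (z 0 - x) + β * (z 1 - y) < (|α| + |β|) / 2 := calc
    _ ≤ |α| * |z 0 - x| + |β| * |z 1 - y| := by
      rw [← abs_mul, ← abs_mul]
      exact add_le_add (le_abs_self _) (le_abs_self _)
    _ ≤ (|α| + |β|) * max |z 0 - x| |z 1 - y| := by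
      rw [add_mul]
      gcongr
      exacts [le_max_left _ _, le_max_right _ _]
    _ < (|α| + |β|) * (1 / 2) := by gcongr; exact max_lt hx hy
    _ = (|α| + |β|) / 2 := by ring
  rw [mem_ofPred_eq] at hge
  linarith

theorem disjoint_segment_interior_squareAt_of_abs_le {h : ℝ} (hp : |p 1| ≤ h) (hq : |q 1| ≤ h)
    (hy : h + 1 / 2 ≤ |y|) : Disjoint (segment ℝ p q) (interior (squareAt x y)) := by
  rw [abs_le] at hp hq
  rcases le_abs.1 hy with hy | hy
  · apply disjoint_segment_interior_squareAt (α := 0) (β := -1) <;> norm_num <;> linarith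
  · apply disjoint_segment_interior_squareAt (α := 0) (β := 1) <;> norm_num <;> linarith

end Squares

section Crossing

theorem forall_mem_closure_le_of_forall_notMem_Ioo {X R : Type*} [TopologicalSpace X]
    [LinearOrder R] [DenselyOrdered R] [TopologicalSpace R] [OrderTopology R] {s : Set X}
    {f : X → R} {a b : R} {z₀ : X} (hs : IsPreconnected s) (hf : ContinuousOn f (closure s))
    (hab : a < b) (havoid : ∀ z ∈ s, f z ∉ Ioo a b) (hz₀ : z₀ ∈ closure s) (hlt : f z₀ < b) :
    ∀ z ∈ closure s, f z ≤ a := by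
  suffices hle : MapsTo f s (Iic a) by
    exact fun z hz => isClosed_Iic.closure_eq.subset (hle.closure_of_continuousOn hf hz)
  intro z hz
  by_contra hza
  have hbz : b ≤ f z := not_lt.1 fun hzb => havoid z hz ⟨not_le.1 hza, hzb⟩
  have hge : MapsTo f s (Ici b) := by
    intro w hw
    by_contra hwb
    obtain ⟨v, hv, hvb⟩ := exists_between (max_lt hab (not_le.1 hwb))
    obtain ⟨hav, hwv⟩ := max_lt_iff.1 hv
    obtain ⟨u, hu, rfl⟩ := (hs.image f (hf.mono subset_closure)).ordConnected.out
      (mem_image_of_mem f hw) (mem_image_of_mem f hz) ⟨hwv.le, hvb.le.trans hbz⟩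
    exact havoid u hu ⟨hav, hvb⟩
  exact hlt.not_ge (isClosed_Ici.closure_eq.subset (hge.closure_of_continuousOn hf hz₀))

theorem graph_le_left_of_squareAt {f : ℝ → ℝ} {x y l u t₀ t : ℝ} (hf : Continuous f) (hlu : l < u)
    (hl : y - 1 / 2 ≤ l) (hu : u ≤ y + 1 / 2)
    (hmiss : ∀ t ∈ Icc l u, !₂[f t, t] ∉ interior (squareAt x y))
    (ht₀ : t₀ ∈ Icc l u) (hlt : f t₀ < x + 1 / 2) (ht : t ∈ Icc l u) : f t ≤ x - 1 / 2 := by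
  rw [← closure_Ioo hlu.ne] at ht₀ ht
  refine forall_mem_closure_le_of_forall_notMem_Ioo isPreconnected_Ioo hf.continuousOn
    (by linarith) (fun s hs hfs => hmiss s (Ioo_subset_Icc_self hs) ?_) ht₀ hlt t ht
  have hx : |f s - x| < 1 / 2 := abs_lt.2 ⟨by linarith [hfs.1], by linarith [hfs.2]⟩
  have hy : |s - y| < 1 / 2 := abs_lt.2 ⟨by linarith [hs.1], by linarith [hs.2]⟩
  exact mem_interior_squareAt.2 ⟨hx, hy⟩

theorem exists_graph_mem_segment {p q : E2} (hqp : q 1 < p 1) :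
    ∃ k m : ℝ, p 0 = k + m * p 1 ∧ q 0 = k + m * q 1 ∧
      ∀ t ∈ Icc (q 1) (p 1), !₂[k + m * t, t] ∈ segment ℝ p q := by
  have hd : 0 < p 1 - q 1 := sub_pos.2 hqp
  refine ⟨q 0 - (p 0 - q 0) / (p 1 - q 1) * q 1, (p 0 - q 0) / (p 1 - q 1), ?_, by ring,
    fun t ht => ⟨(t - q 1) / (p 1 - q 1), (p 1 - t) / (p 1 - q 1),
      div_nonneg (sub_nonneg.2 ht.1) hd.le, div_nonneg (sub_nonneg.2 ht.2) hd.le, ?_, ?_⟩⟩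
  · field_simp
    ring
  · field_simp
    ring
  · ext i
    fin_cases i <;>
      simp only [Fin.zero_eta, Fin.mk_one, PiLp.add_apply, PiLp.smul_apply, smul_eq_mul,
        Matrix.cons_val_zero, Matrix.cons_val_one, Matrix.cons_val_fin_one] <;>
      field_simp <;> ring

end Crossing

section Quincunx

/-- Five unit squares in the pattern of the five on a die; slits of height `ε` separate the central
square from the upper and the lower pair. -/
def quincunx (ε : ℝ) : Set (Set E2) :=
  {squareAt 0 0, squareAt (3 / 4) (1 + ε), squareAt (-(3 / 4)) (1 + ε),
    squareAt (-(3 / 4)) (-(1 + ε)), squareAt (3 / 4) (-(1 + ε))}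

theorem mem_quincunx_iff {ε : ℝ} (hε : 0 < ε) {C : Set E2} :
    C ∈ quincunx ε ↔
      C = squareAt 0 0 ∨ ∃ x y, |x| = 3 / 4 ∧ |y| = 1 + ε ∧ C = squareAt x y := by
  have hx (x : ℝ) : |x| = 3 / 4 ↔ x = 3 / 4 ∨ x = -(3 / 4) := abs_eq (by norm_num)
  have hy (y : ℝ) : |y| = 1 + ε ↔ y = 1 + ε ∨ y = -(1 + ε) := abs_eq (by linarith)
  simp only [quincunx, mem_insert_iff, mem_singleton_iff, hx, hy]
  constructor
  · rintro (rfl | rfl | rfl | rfl | rfl) <;> simp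
  · rintro (rfl | ⟨x, y, rfl | rfl, rfl | rfl, rfl⟩) <;> simp

/-- The reflection of the plane that changes the sign of the `j`-th coordinate. -/
def reflectCoord (j : Fin 2) : E2 ≃ₗᵢ[ℝ] E2 :=
  LinearIsometryEquiv.piLpCongrRight 2 fun i => if i = j then .neg ℝ else .refl ℝ ℝ

theorem reflectCoord_apply (j i : Fin 2) (p : E2) :
    reflectCoord j p i = if i = j then -p i else p i := by
  simp only [reflectCoord, LinearIsometryEquiv.piLpCongrRight_apply]
  split_ifs <;> rfl

theorem reflectCoord_reflectCoord (j : Fin 2) (p : E2) :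
    reflectCoord j (reflectCoord j p) = p := by
  ext i
  by_cases h : i = j <;> simp [reflectCoord_apply, h]

theorem image_reflectCoord_squareAt (j : Fin 2) (x y : ℝ) :
    reflectCoord j '' squareAt x y =
      squareAt (if j = 0 then -x else x) (if j = 1 then -y else y) := by
  rw [image_eq_preimage_of_inverse (reflectCoord_reflectCoord j) (reflectCoord_reflectCoord j)]
  ext p
  have habs (a b : ℝ) : |-a - b| = |a - -b| := by rw [← abs_neg]; ring_nf
  fin_cases j <;> simp [mem_squareAt, reflectCoord_apply, habs]

theorem image_reflectCoord_quincunx (j : Fin 2) (ε : ℝ) :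
    image (reflectCoord j) '' quincunx ε = quincunx ε := by
  simp only [quincunx, image_insert_eq, image_singleton, image_reflectCoord_squareAt]
  fin_cases j <;> ext C <;>
    simp only [Fin.zero_eta, Fin.mk_one, zero_ne_one, one_ne_zero, ↓reduceIte, neg_zero, neg_neg,
      mem_insert_iff, mem_singleton_iff] <;>
    tauto

theorem canSee_quincunx_reflectCoord {ε : ℝ} {p : E2} (j : Fin 2)
    (h : ∀ C ∈ quincunx ε, CanSee (quincunx ε) p C) :
    ∀ C ∈ quincunx ε, CanSee (quincunx ε) (reflectCoord j p) C := by
  rw [← image_reflectCoord_quincunx j ε]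
  exact forall_mem_image.2 fun C hC =>
    CanSee.image (reflectCoord j).toContinuousLinearEquiv (h C hC)

/-- `m * ε` is the sideways movement within a slit of a line of sight `X = k + m Y`. -/
theorem slope_mul_lt {ε M m px py qx qy : ℝ} (hε : 0 < ε) (hεM : ε * (M + 2) ≤ 1 / 8)
    (hpx : px < M) (hqx : -2 ≤ qx) (hqp : 1 / 2 ≤ py - qy) (hm : m * (py - qy) = px - qx) :
    m * ε < 1 / 4 := by
  rcases le_or_gt m 0 with hm0 | hm0
  · nlinarith
  · have hm2 : m < 2 * (M + 2) := by nlinarith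
    nlinarith

theorem graph_le_left_of_centre {ε k m l u t : ℝ} (hl : l ≤ -(1 / 2) - ε) (hl' : -(3 / 2) - ε ≤ l)
    (hε : 0 < ε) (hu : 0 ≤ u) (hstart : k + m * l ≤ -(1 / 4)) (hslit : m * ε < 1 / 4)
    (hlowerRight :
      ∀ t ∈ Icc l u, !₂[k + m * t, t] ∉ interior (squareAt (3 / 4) (-(1 + ε))))
    (hcentre : ∀ t ∈ Icc l u, !₂[k + m * t, t] ∉ interior (squareAt 0 0))
    (ht : t ∈ Icc (-(1 / 2)) (min u (1 / 2))) : k + m * t ≤ -(1 / 2) := by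
  have hcont : Continuous fun t => k + m * t := by fun_prop
  have hexit : k + m * (-(1 / 2) - ε) ≤ 1 / 4 := by
    rcases hl.eq_or_lt with rfl | hl
    · linarith
    · have := graph_le_left_of_squareAt hcont hl (by linarith) (by linarith)
        (fun s hs => hlowerRight s (Icc_subset_Icc_right (by linarith) hs))
        (left_mem_Icc.2 hl.le) (by linarith) (right_mem_Icc.2 hl.le)
      linarith
  have hlt : -(1 / 2) < min u (1 / 2) := lt_min (by linarith) (by norm_num)
  have := graph_le_left_of_squareAt hcont hlt (by norm_num) (by simp)
    (fun s hs => hcentre s (Icc_subset_Icc (by linarith) (min_le_left _ _) hs))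
    (left_mem_Icc.2 hlt.le) (by linarith) ht
  linarith

theorem neg_of_visible_lowerLeft {ε M : ℝ} {p q : E2} (hε : 0 < ε) (hεM : ε * (M + 2) ≤ 1 / 8)
    (hp : 0 ≤ p 1) (hpM : p 0 < M) (hq : q ∈ squareAt (-(3 / 4)) (-(1 + ε)))
    (hlowerRight : Disjoint (segment ℝ p q) (interior (squareAt (3 / 4) (-(1 + ε)))))
    (hcentre : Disjoint (segment ℝ p q) (interior (squareAt 0 0)))
    (hupperLeft : Disjoint (segment ℝ p q) (interior (squareAt (-(3 / 4)) (1 + ε)))) :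
    p 0 < 0 := by
  obtain ⟨hq0, hq1⟩ := mem_squareAt.1 hq
  rw [abs_le] at hq0 hq1
  obtain ⟨k, m, hpk, hqk, hseg⟩ := exists_graph_mem_segment (show q 1 < p 1 by linarith)
  have hslit : m * ε < 1 / 4 :=
    slope_mul_lt hε hεM hpM (show -2 ≤ q 0 by linarith) (show 1 / 2 ≤ p 1 - q 1 by linarith)
      (by linarith)
  have hleft {t : ℝ} (ht : t ∈ Icc (-(1 / 2)) (min (p 1) (1 / 2))) : k + m * t ≤ -(1 / 2) :=
    graph_le_left_of_centre (by linarith) (by linarith) hε hp (by linarith) hslit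
      (fun t ht => disjoint_left.1 hlowerRight (hseg t ht))
      (fun t ht => disjoint_left.1 hcentre (hseg t ht)) ht
  have hmin : -(1 / 2) ≤ min (p 1) (1 / 2) := le_min (by linarith) (by norm_num)
  rcases le_or_gt m 0 with hm | hm
  · have := hleft (left_mem_Icc.2 hmin)
    nlinarith
  rcases le_or_gt (p 1) (1 / 2 + ε) with hp1 | hp1
  · have hgap : p 1 - min (p 1) (1 / 2) ≤ ε := by
      rw [sub_le_comm]
      exact le_min (by linarith) (by linarith)
    have := hleft (right_mem_Icc.2 hmin)
    nlinarith
  · have hhalf : k + m * (1 / 2) ≤ -(1 / 2) := hleft ⟨by norm_num, le_min (by linarith) le_rfl⟩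
    have hlt : 1 / 2 + ε < min (p 1) (3 / 2 + ε) := lt_min hp1 (by linarith)
    have hupper := graph_le_left_of_squareAt (x := -(3 / 4)) (y := 1 + ε)
      (f := fun t => k + m * t) (by fun_prop) hlt (by linarith)
      ((min_le_right _ _).trans (by linarith))
      (fun t ht => disjoint_left.1 hupperLeft
        (hseg t (Icc_subset_Icc (by linarith) (min_le_left _ _) ht)))
      (left_mem_Icc.2 hlt.le) (by linarith) (left_mem_Icc.2 hlt.le)
    nlinarith

theorem le_abs_of_canSee_quincunx {ε M : ℝ} {p : E2} (hε : 0 < ε) (hεM : ε * (M + 2) ≤ 1 / 8)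
    (h : ∀ C ∈ quincunx ε, CanSee (quincunx ε) p C) : M ≤ |p 0| := by
  wlog hp : 0 ≤ p 1 generalizing p
  · have := this (canSee_quincunx_reflectCoord 1 h)
    rw [reflectCoord_apply, reflectCoord_apply, if_pos rfl, if_neg zero_ne_one] at this
    exact this (by linarith)
  by_contra! hM
  have hneg {p : E2} (h : ∀ C ∈ quincunx ε, CanSee (quincunx ε) p C) (hp : 0 ≤ p 1)
      (hM : p 0 < M) : p 0 < 0 := by
    have hmem : squareAt (-(3 / 4)) (-(1 + ε)) ∈ quincunx ε := by simp [quincunx]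
    obtain ⟨q, hq, hpq⟩ := (canSee_iff_exists_mem (isClosed_squareAt _ _) hmem).1 (h _ hmem)
    exact neg_of_visible_lowerLeft hε hεM hp hM hq (hpq _ (by simp [quincunx]))
      (hpq _ (by simp [quincunx])) (hpq _ (by simp [quincunx]))
  have hleft : p 0 < 0 := hneg h hp (lt_of_abs_lt hM)
  have hright : reflectCoord 0 p 0 < 0 :=
    hneg (canSee_quincunx_reflectCoord 0 h) (by simpa [reflectCoord_apply] using hp)
      (by simpa [reflectCoord_apply] using (neg_le_abs _).trans_lt hM)
  rw [reflectCoord_apply, if_pos rfl] at hright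
  linarith

end Quincunx

section Wall

/-- The centres of the six squares of the theorem. -/
def wallCentre (ε : ℝ) : Fin 6 → ℝ × ℝ :=
  ![(0, 0), (3 / 4, 1 + ε), (-(3 / 4), 1 + ε), (-(3 / 4), -(1 + ε)), (3 / 4, -(1 + ε)), (2, 3)]

/-- The family of six squares of the theorem: a quincunx and a remote square. -/
def wall (ε : ℝ) : Set (Set E2) :=
  insert (squareAt 2 3) (quincunx ε)

theorem range_squareAt_wallCentre (ε : ℝ) :
    range (fun i => squareAt (wallCentre ε i).1 (wallCentre ε i).2) = wall ε := by
  ext C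
  simp only [wall, quincunx, wallCentre, mem_range, mem_insert_iff, mem_singleton_iff,
    Fin.exists_fin_succ, Matrix.cons_val_zero, Matrix.cons_val_succ, Matrix.cons_val_fin_one,
    exists_const, eq_comm]
  tauto

theorem disjoint_squareAt_wallCentre {ε : ℝ} (hε : 0 < ε) {i j : Fin 6} (hij : i ≠ j) :
    Disjoint (squareAt (wallCentre ε i).1 (wallCentre ε i).2)
      (squareAt (wallCentre ε j).1 (wallCentre ε j).2) := by
  apply disjoint_squareAt
  simp only [wallCentre, lt_abs]
  fin_cases i <;> fin_cases j <;>
    first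
    | exact absurd rfl hij
    | (left; left; norm_num; done)
    | (left; right; norm_num; done)
    | (right; left; norm_num; linarith)
    | (right; right; norm_num; linarith)

theorem exists_eq_squareAt_of_mem_wall {ε : ℝ} (hε : 0 < ε) (hε1 : ε ≤ 1 / 2) {C : Set E2}
    (hC : C ∈ wall ε) : ∃ x y, |x| ≤ 2 ∧ |y| ≤ 3 ∧ C = squareAt x y := by
  rcases hC with rfl | hC
  · exact ⟨2, 3, by norm_num, by norm_num, rfl⟩
  rcases (mem_quincunx_iff hε).1 hC with rfl | ⟨x, y, hx, hy, rfl⟩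
  · exact ⟨0, 0, by norm_num, by norm_num, rfl⟩
  · exact ⟨x, y, by linarith, by linarith, rfl⟩

theorem squareAt_subset_closedBall {x y : ℝ} (hx : |x| ≤ 2) (hy : |y| ≤ 3) :
    squareAt x y ⊆ closedBall 0 5 := by
  intro p hp
  obtain ⟨hpx, hpy⟩ := mem_squareAt.1 hp
  have h0 : |p 0| ≤ 5 / 2 := by linarith [abs_sub_abs_le_abs_sub (p 0) x]
  have h1 : |p 1| ≤ 7 / 2 := by linarith [abs_sub_abs_le_abs_sub (p 1) y]
  rw [mem_closedBall_zero_iff, EuclideanSpace.norm_eq, Fin.sum_univ_two, Real.norm_eq_abs,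
    Real.norm_eq_abs]
  refine Real.sqrt_le_iff.2 ⟨by norm_num, ?_⟩
  nlinarith [abs_nonneg (p 0), abs_nonneg (p 1)]

theorem sUnion_wall_subset_closedBall {ε : ℝ} (hε : 0 < ε) (hε1 : ε ≤ 1 / 2) :
    ⋃₀ wall ε ⊆ closedBall 0 5 := sUnion_subset fun C hC => by
  obtain ⟨x, y, hx, hy, rfl⟩ := exists_eq_squareAt_of_mem_wall hε hε1 hC
  exact squareAt_subset_closedBall hx hy

theorem canSee_wall_of_abs_le {ε x y : ℝ} {p q : E2} (hε : 0 < ε) (hε1 : ε ≤ 1 / 2)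
    (hxy : squareAt x y ∈ quincunx ε) (hq : q ∈ squareAt x y) (hp1 : |p 1| ≤ 1 / 2 + ε)
    (hq1 : |q 1| ≤ 1 / 2 + ε)
    (hcentre : Disjoint (segment ℝ p q) (interior (squareAt 0 0))) :
    CanSee (wall ε) p (squareAt x y) := by
  refine (canSee_iff_exists_mem (isClosed_squareAt x y) (mem_insert_of_mem _ hxy)).2
    ⟨q, hq, fun D hD => ?_⟩
  have hrow {x y : ℝ} (hy : 1 + ε ≤ |y|) : Disjoint (segment ℝ p q) (interior (squareAt x y)) :=
    disjoint_segment_interior_squareAt_of_abs_le hp1 hq1 (by linarith)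
  rcases hD with rfl | hD
  · exact hrow (by norm_num; linarith)
  rcases (mem_quincunx_iff hε).1 hD with rfl | ⟨x', y', -, hy', rfl⟩
  · exact hcentre
  · exact hrow hy'.ge

theorem canSee_wall_centre {ε : ℝ} (hε : 0 < ε) (hε1 : ε ≤ 1 / 2) :
    CanSee (wall ε) !₂[1 / ε, 0] (squareAt 0 0) := by
  have hL : 2 ≤ 1 / ε := (le_one_div two_pos hε).2 hε1
  have habs : |(0 : ℝ)| ≤ 1 / 2 + ε := by rw [abs_zero]; linarith
  refine canSee_wall_of_abs_le (q := !₂[1 / 2, 0]) hε hε1 (mem_insert _ _) ?_ habs habs ?_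
  · simp [mem_squareAt]
  · exact disjoint_segment_interior_squareAt (α := 1) (β := 0) (by norm_num)
      (by norm_num at hL ⊢; linarith) (by norm_num)

theorem canSee_wall_corner {ε x y : ℝ} (hε : 0 < ε) (hε1 : ε ≤ 1 / 2) (hx : |x| = 3 / 4)
    (hy : |y| = 1 + ε) : CanSee (wall ε) !₂[1 / ε, 0] (squareAt x y) := by
  have hC : squareAt x y ∈ quincunx ε := (mem_quincunx_iff hε).2 (.inr ⟨x, y, hx, hy, rfl⟩)
  have hx' : -(3 / 4) ≤ x := hx ▸ neg_abs_le x
  obtain ⟨τ, hτ, rfl⟩ : ∃ τ : ℝ, |τ| = 1 ∧ y = τ * (1 + ε) := by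
    rcases eq_or_eq_neg_of_abs_eq hy with rfl | rfl
    exacts [⟨1, abs_one, (one_mul _).symm⟩, ⟨-1, by simp, (neg_one_mul _).symm⟩]
  have hττ : τ * τ = 1 := by rw [← abs_mul_abs_self, hτ, one_mul]
  refine canSee_wall_of_abs_le (q := !₂[x + 1 / 2, τ * (1 / 2 + ε)]) hε hε1 hC ?_ ?_ ?_ ?_
  · refine mem_squareAt.2 ⟨by simp, ?_⟩
    calc |τ * (1 / 2 + ε) - τ * (1 + ε)| = |τ * -(1 / 2)| := by ring_nf
      _ = 1 / 2 := by rw [abs_mul, hτ]; norm_num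
      _ ≤ 1 / 2 := le_rfl
  · change |(0 : ℝ)| ≤ 1 / 2 + ε
    rw [abs_zero]
    linarith
  · change |τ * (1 / 2 + ε)| ≤ 1 / 2 + ε
    rw [abs_mul, hτ, one_mul, abs_of_nonneg (by linarith)]
  · have hmax : ε * 0 + τ * 0 + (|ε| + |τ|) / 2 = (ε + 1) / 2 := by
      rw [hτ, abs_of_pos hε]; ring
    refine disjoint_segment_interior_squareAt (α := ε) (β := τ) (by rw [hτ]; positivity) ?_ ?_ <;>
      rw [hmax]
    · calc (ε + 1) / 2 ≤ 1 := by linarith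
        _ = ε * (1 / ε) + τ * 0 := by field_simp; ring
    · calc (ε + 1) / 2 ≤ ε * (x + 1 / 2) + (1 / 2 + ε) := by nlinarith
        _ = ε * (x + 1 / 2) + τ * (τ * (1 / 2 + ε)) := by rw [← mul_assoc, hττ, one_mul]

theorem canSee_wall_remote {ε : ℝ} (hε : 0 < ε) (hε1 : ε ≤ 1 / 2) :
    CanSee (wall ε) !₂[1 / ε, 0] (squareAt 2 3) := by
  have hL : 2 ≤ 1 / ε := (le_one_div two_pos hε).2 hε1
  refine (canSee_iff_exists_mem (isClosed_squareAt 2 3) (mem_insert _ _)).2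
    ⟨!₂[3 / 2, 5 / 2], by norm_num [mem_squareAt, abs_le], fun D hD => ?_⟩
  have hright {x y : ℝ} (hx : |x| ≤ 3 / 4) :
      Disjoint (segment ℝ (!₂[1 / ε, 0] : E2) !₂[3 / 2, 5 / 2]) (interior (squareAt x y)) := by
    have hx' := (le_abs_self x).trans hx
    exact disjoint_segment_interior_squareAt (α := 1) (β := 0) (by norm_num)
      (by norm_num at hL ⊢; linarith) (by norm_num; linarith)
  rcases hD with rfl | hD
  · apply disjoint_segment_interior_squareAt (α := 0) (β := -1) <;> norm_num
  rcases (mem_quincunx_iff hε).1 hD with rfl | ⟨x, y, hx, -, rfl⟩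
  · exact hright (by norm_num)
  · exact hright hx.le

theorem canSee_wall {ε : ℝ} (hε : 0 < ε) (hε1 : ε ≤ 1 / 2) {C : Set E2} (hC : C ∈ wall ε) :
    CanSee (wall ε) !₂[1 / ε, 0] C := by
  rcases hC with rfl | hC
  · exact canSee_wall_remote hε hε1
  rcases (mem_quincunx_iff hε).1 hC with rfl | ⟨x, y, hx, hy, rfl⟩
  · exact canSee_wall_centre hε hε1
  · exact canSee_wall_corner hε hε1 hx hy

theorem le_infDist_convexHull_wall {ε Δ : ℝ} {p : E2} (hε : 0 < ε) (hε1 : ε ≤ 1 / 2)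
    (hεΔ : ε * (Δ + 5 + 2) ≤ 1 / 8) (h : ∀ C ∈ wall ε, CanSee (wall ε) p C) :
    Δ ≤ infDist p (convexHull ℝ (⋃₀ wall ε)) := by
  have hquincunx : ∀ C ∈ quincunx ε, CanSee (quincunx ε) p C := fun C hC =>
    (h C (mem_insert_of_mem _ hC)).anti (subset_insert _ _)
  have hne : (⋃₀ wall ε).Nonempty :=
    ⟨!₂[2, 3], squareAt 2 3, mem_insert _ _, by simp [mem_squareAt]⟩
  have hp : Δ + 5 ≤ ‖p‖ :=
    (le_abs_of_canSee_quincunx hε hεΔ hquincunx).trans (PiLp.norm_apply_le p 0)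
  linarith [sub_le_infDist_convexHull_of_subset_closedBall hne
    (sUnion_wall_subset_closedBall hε hε1) p]

end Wall

/-- For every `Δ > 0` there are six pairwise disjoint axis-parallel unit squares,
with convex hull of diameter at most 10, observable from a single point, such that
every single observation point is at distance at least `Δ` from the convex hull. -/
theorem far_single_observation_point (Δ : ℝ) (hΔ : 0 < Δ) :
    ∃ sq : Fin 6 → ℝ × ℝ,
      (∀ i j : Fin 6, i ≠ j →
        Disjoint (UnitSq (sq i).1 (sq i).2) (UnitSq (sq j).1 (sq j).2)) ∧
      Metric.diam (convexHull ℝ (⋃ i, UnitSq (sq i).1 (sq i).2)) ≤ 10 ∧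
      (∃ p : E2, ∀ i : Fin 6,
        CanSee (Set.range fun i => UnitSq (sq i).1 (sq i).2) p (UnitSq (sq i).1 (sq i).2)) ∧
      (∀ p : E2,
        (∀ i : Fin 6,
          CanSee (Set.range fun i => UnitSq (sq i).1 (sq i).2) p (UnitSq (sq i).1 (sq i).2)) →
        Δ ≤ Metric.infDist p (convexHull ℝ (⋃ i, UnitSq (sq i).1 (sq i).2))) := by
  obtain ⟨ε, hε, hε1, hεΔ⟩ : ∃ ε > 0, ε ≤ 1 / 2 ∧ ε * (Δ + 5 + 2) ≤ 1 / 8 :=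
    ⟨1 / (8 * (Δ + 5 + 2)), by positivity, by rw [div_le_div_iff₀] <;> linarith,
      by field_simp; norm_num⟩
  let sq (i : Fin 6) : ℝ × ℝ := ((wallCentre ε i).1 - 1 / 2, (wallCentre ε i).2 - 1 / 2)
  have hrange : (range fun i => UnitSq (sq i).1 (sq i).2) = wall ε := range_squareAt_wallCentre ε
  have hunion : ⋃ i, UnitSq (sq i).1 (sq i).2 = ⋃₀ wall ε := by rw [← hrange, sUnion_range]
  refine ⟨sq, fun i j hij => disjoint_squareAt_wallCentre hε hij, ?_⟩
  rw [hunion, hrange]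
  refine ⟨?_, ⟨!₂[1 / ε, 0], fun i => canSee_wall hε hε1 (hrange ▸ mem_range_self i)⟩,
    fun p hp => le_infDist_convexHull_wall hε hε1 hεΔ fun C hC => ?_⟩
  · calc diam (convexHull ℝ (⋃₀ wall ε)) ≤ 2 * 5 := diam_convexHull_le_of_subset_closedBall
          (by norm_num) (sUnion_wall_subset_closedBall hε hε1)
      _ = 10 := by norm_num
  · obtain ⟨i, rfl⟩ := hrange.symm ▸ hC
    exact hp i

end
end

section
/- Let F be a finite family of pairwise disjoint translates of a convex body in ℝ², let C ∈ F, and let V(C) = {p ∈ ℝ² : there exists q ∈ ∂C such that the closed segment [p,q] does not intersect the interior of any member of F}. Then for every point o ∉ C ∪ V(C), there exists a ray emanating from o (a set {o + t·v : t ≥ 0} for some nonzero vector v) that is disjoint from C ∪ V(C). -/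
/-!
Fix `o ∉ C ∪ V(C)`. In the direction of each `r ∈ C` some obstacle `D ≠ C` meets the segment from
`o` to `r`; let `w` be the translation carrying `C` to `D`.

If `w` and `q - o` lie weakly on the same side of the line through `o` and `r`, for some `q ∈ C`,
then `D` also blocks every segment from `q` to the ray opposite to `r`. Indeed `D` contains `q + w`
and a point between `o` and `r`, and the chord joining them crosses the segment: a line separating
`C` from `D` rules out the positions of `w` for which it would not.

It remains to find one `r ∈ C` whose blocking translations serve all `q ∈ C`. Otherwise, for each
`r ∈ C`, all the blocking translations of `r` lie strictly on one side of the line through `o` and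
`r`. The two possibilities define disjoint open subsets covering `C`. Neither is empty, as the two
tangents from `o` to `C` show, and this contradicts the connectedness of `C`.
-/

open Set Metric ENNReal

noncomputable section

/-- The (unlimited vision) visibility region of `C` with respect to the obstacle
family `F`: all points that see some boundary point of `C`. -/
def Vis (F : Set (Set E2)) (C : Set E2) : Set E2 :=
  {p | ∃ q ∈ frontier C, ∀ D ∈ F, Disjoint (segment ℝ p q) (interior D)}

lemma add_smul_sub_notMem {E : Type*} [AddCommGroup E] [Module ℝ E] {C : Set E} {o r : E}
    (hC : Convex ℝ C) (ho : o ∉ C) (hr : r ∈ C) {t : ℝ} (ht : 0 ≤ t) : o + t • (o - r) ∉ C := by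
  intro hmem
  have hmix := hC hmem hr (a := 1 / (1 + t)) (b := t / (1 + t)) (by positivity) (by positivity)
    (by field_simp)
  refine ho ?_
  convert hmix using 1
  match_scalars
  · field_simp
  · field_simp
    ring

section Separation

variable {E : Type*} [AddCommGroup E] [Module ℝ E] [TopologicalSpace E] [IsTopologicalAddGroup E]
  [ContinuousSMul ℝ E] {C D : Set E} {o r q w : E}

lemma exists_separating_functional (hC : Convex ℝ C) (hD : Convex ℝ D) (hCD : Disjoint C D)
    (hint : (interior D).Nonempty) :
    ∃ (f : StrongDual ℝ E) (u : ℝ),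
      (∀ x ∈ interior D, f x < u) ∧ (∀ x ∈ D, f x ≤ u) ∧ ∀ x ∈ C, u ≤ f x := by
  obtain ⟨f, u, hfD, hfC⟩ := geometric_hahn_banach_open hD.interior isOpen_interior hC
    (hCD.symm.mono_left interior_subset)
  refine ⟨f, u, hfD, fun x hx => ?_, hfC⟩
  have hx' : x ∈ closure (interior D) :=
    hD.closure_interior_eq_closure_of_nonempty_interior hint ▸ subset_closure hx
  exact closure_minimal (fun y hy => (hfD y hy).le) (isClosed_le f.continuous continuous_const) hx'

-- The relation `k • w = β • (q - o) - α • (r - o)` with `0 ≤ β` says that `w` lies weakly on the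
-- same side of the line through `o` and `r` as `q`. It is kept homogeneous so as to cover collinear
-- `o`, `r`, `q` as well, with `k = 0` and `β = 1`.
lemma pos_and_mul_le_of_mem_interior (hC : Convex ℝ C) (hD : Convex ℝ D) (hCD : Disjoint C D)
    (hr : r ∈ C) (hq : q ∈ C) (hqw : q + w ∈ D) {s : ℝ} (hs0 : 0 < s) (hs1 : s ≤ 1)
    (hs : o + s • (r - o) ∈ interior D) {k α β : ℝ} (hk : 0 ≤ k) (hβ : 0 ≤ β) (hkβ : 0 < k + β)
    (h : k • w = β • (q - o) - α • (r - o)) : 0 < α ∧ s * β ≤ α := by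
  obtain ⟨f, u, hfint, hfD, hfC⟩ := exists_separating_functional hC hD hCD ⟨_, hs⟩
  have hfs : f o + s * (f r - f o) < u := by simpa using hfint _ hs
  have hfr : 0 < f r - f o := by nlinarith [hfC r hr]
  have hfq : s * (f r - f o) ≤ f q - f o := by linarith [hfC q hq]
  have hfw : f w ≤ 0 := by
    have := hfD _ hqw
    rw [map_add] at this
    linarith [hfC q hq]
  have hf : k * f w = β * (f q - f o) - α * (f r - f o) := by simpa using congrArg f h
  have hle : s * β ≤ α := by
    refine le_of_mul_le_mul_right ?_ hfr
    calc s * β * (f r - f o) = β * (s * (f r - f o)) := by ring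
      _ ≤ β * (f q - f o) := mul_le_mul_of_nonneg_left hfq hβ
      _ ≤ β * (f q - f o) - k * f w := by linarith [mul_nonpos_of_nonneg_of_nonpos hk hfw]
      _ = α * (f r - f o) := by linarith
  refine ⟨((mul_nonneg hs0.le hβ).trans hle).lt_of_ne' fun hα => ?_, hle⟩
  have hβ0 : β = 0 := by nlinarith
  have hw0 : w = 0 := by simpa [hα, hβ0, show k ≠ 0 by linarith] using h
  exact disjoint_left.1 hCD hq (by simpa [hw0] using hqw)

lemma not_disjoint_opposite_ray_segment_interior (hC : Convex ℝ C) (hD : Convex ℝ D)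
    (hCD : Disjoint C D) (hr : r ∈ C) (hq : q ∈ C) (hqw : q + w ∈ D)
    (hblock : ¬ Disjoint (segment ℝ o r) (interior D))
    {k α β : ℝ} (hk : 0 ≤ k) (hβ : 0 ≤ β) (hkβ : 0 < k + β)
    (h : k • w = β • (q - o) - α • (r - o)) {t : ℝ} (ht : 0 ≤ t) :
    ¬ Disjoint (segment ℝ (o + t • (o - r)) q) (interior D) := by
  have hopen : ¬ Disjoint (openSegment ℝ o r) (interior D) := fun hdis =>
    hblock ((hdis.closure_left isOpen_interior).mono_left segment_subset_closure_openSegment)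
  rw [openSegment_eq_image'] at hopen
  obtain ⟨_, ⟨s, ⟨hs0, hs1⟩, rfl⟩, hs⟩ := not_disjoint_iff.1 hopen
  obtain ⟨hα, hsβ⟩ := pos_and_mul_le_of_mem_interior hC hD hCD hr hq hqw hs0 hs1.le hs hk
    hβ hkβ h
  -- The chord from `o + s • (r - o)` to `q + w` crosses the segment at parameter `k * l`.
  obtain ⟨l, hl⟩ : ∃ l, l = (s + t) / (k * s + α + t * (k + β)) := ⟨_, rfl⟩
  have hden : 0 < k * s + α + t * (k + β) := by positivity
  have hl0 : 0 ≤ l := hl ▸ by positivity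
  have hcross : l * (k * s + α + t * (k + β)) = s + t := by rw [hl, div_mul_cancel₀ _ hden.ne']
  have hchord : k * l < 1 := by
    rw [hl, mul_div_assoc', div_lt_one hden]
    linarith [mul_nonneg ht hβ]
  have hsegment : l * (k + β) ≤ 1 := by
    rw [hl, div_mul_eq_mul_div, div_le_one hden]
    linarith
  refine not_disjoint_iff.2 ⟨(1 - k * l) • (o + s • (r - o)) + (k * l) • (q + w), ?_,
    hD.combo_interior_self_mem_interior hs hqw (by linarith) (by positivity) (by ring)⟩
  refine ⟨1 - l * (k + β), l * (k + β), by linarith, by positivity, by ring, ?_⟩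
  linear_combination (norm := module) hcross • (r - o) - l • h

end Separation

section AreaForm

variable {V : Type*} [NormedAddCommGroup V] [InnerProductSpace ℝ V]
  [Fact (Module.finrank ℝ V = 2)] (ω : Orientation ℝ V (Fin 2))

lemma continuous_areaForm_right (x : V) : Continuous (ω.areaForm x) := by
  simpa using (ω.areaForm' x).continuous

lemma exists_eq_smul_of_areaForm_eq_zero {a x : V} (ha : a ≠ 0) (h : ω.areaForm a x = 0) :
    ∃ c : ℝ, x = c • a := by
  refine ⟨inner ℝ a x / ‖a‖ ^ 2, ext_inner_right ℝ fun y => ?_⟩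
  have hy := ω.inner_mul_inner_add_areaForm_mul_areaForm a x y
  rw [h, zero_mul, add_zero] at hy
  rw [real_inner_smul_left, div_mul_eq_mul_div, hy, mul_div_cancel_left₀ _ (by positivity)]

lemma exists_smul_eq_sub_of_areaForm_mul_nonneg {a b w : V} (ha : a ≠ 0)
    (h : 0 ≤ ω.areaForm a w * ω.areaForm a b) :
    ∃ k α β : ℝ, 0 ≤ k ∧ 0 ≤ β ∧ 0 < k + β ∧ k • w = β • b - α • a := by
  by_cases hb : ω.areaForm a b = 0
  · obtain ⟨c, rfl⟩ := exists_eq_smul_of_areaForm_eq_zero ω ha hb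
    exact ⟨0, c, 1, le_rfl, zero_le_one, by norm_num, by simp⟩
  · set k := ω.areaForm a b ^ 2
    set β := ω.areaForm a w * ω.areaForm a b
    have hpar : ω.areaForm a (β • b - k • w) = 0 := by
      simp only [map_sub, map_smul, smul_eq_mul, k, β]
      ring
    obtain ⟨α, hα⟩ := exists_eq_smul_of_areaForm_eq_zero ω ha hpar
    exact ⟨k, α, β, by positivity, h, by positivity, by rw [← hα]; abel⟩

lemma exists_tangent_point {C : Set V} (hconv : Convex ℝ C) (hcpt : IsCompact C)
    (hne : C.Nonempty) {o : V} (ho : o ∉ C) :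
    ∃ r ∈ C, ∀ q ∈ C, ω.areaForm (r - o) (q - o) ≤ 0 := by
  have : FiniteDimensional ℝ V := .of_fact_finrank_eq_two
  have : CompleteSpace V := FiniteDimensional.complete ℝ V
  obtain ⟨f, u, hfo, hf⟩ := geometric_hahn_banach_point_closed hconv hcpt.isClosed ho
  set g := (InnerProductSpace.toDual ℝ V).symm f
  have hpos : ∀ q ∈ C, 0 < inner ℝ g (q - o) := fun q hq => by
    rw [InnerProductSpace.toDual_symm_apply, map_sub]
    linarith [hf q hq]
  have hcont : ContinuousOn (fun q => ω.areaForm g (q - o) / inner ℝ g (q - o)) C := by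
    refine ContinuousOn.div ?_ (by fun_prop) fun q hq => (hpos q hq).ne'
    exact ((continuous_areaForm_right ω g).comp (continuous_id.sub continuous_const)).continuousOn
  -- This quotient is the slope of `q` as seen from `o`, so it is extremal at a tangent point.
  obtain ⟨r, hr, hmax⟩ := hcpt.exists_isMaxOn hne hcont
  refine ⟨r, hr, fun q hq => ?_⟩
  have hslope := (div_le_div_iff₀ (hpos q hq) (hpos r hr)).1 (hmax hq)
  have hg : g ≠ 0 := fun h0 => by simpa [h0] using hpos r hr
  refine nonpos_of_mul_nonpos_right (a := ‖g‖ ^ 2) ?_ (by positivity)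
  rw [← ω.inner_mul_areaForm_sub]
  linarith

lemma isOpen_setOf_exists_areaForm_pos {B : V → Set V} (hB : ∀ w, IsOpen {r | w ∈ B r}) (o : V) :
    IsOpen {r | ∃ w ∈ B r, 0 < ω.areaForm (r - o) w} := by
  have hside (w : V) : IsOpen {r | 0 < ω.areaForm (r - o) w} := by
    simp only [ω.areaForm_swap _ w]
    exact isOpen_lt continuous_const
      ((continuous_areaForm_right ω w).comp (continuous_id.sub continuous_const)).neg
  have heq : {r | ∃ w ∈ B r, 0 < ω.areaForm (r - o) w} =
      ⋃ w, {r | w ∈ B r} ∩ {r | 0 < ω.areaForm (r - o) w} := by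
    ext r
    simp
  rw [heq]
  exact isOpen_iUnion fun w => (hB w).inter (hside w)

lemma exists_forall_exists_areaForm_mul_nonneg {C : Set V} (hconv : Convex ℝ C)
    (hcpt : IsCompact C) (hne : C.Nonempty) {o : V} (ho : o ∉ C) {B : V → Set V}
    (hBne : ∀ r ∈ C, (B r).Nonempty) (hB : ∀ w, IsOpen {r | w ∈ B r}) :
    ∃ r ∈ C, ∀ q ∈ C, ∃ w ∈ B r, 0 ≤ ω.areaForm (r - o) w * ω.areaForm (r - o) (q - o) := by
  by_contra! hopp
  have hmeets (ω' : Orientation ℝ V (Fin 2)) (hopp' : ∀ r ∈ C, ∃ q ∈ C, ∀ w ∈ B r,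
      ω'.areaForm (r - o) w * ω'.areaForm (r - o) (q - o) < 0) :
      (C ∩ {r | ∃ w ∈ B r, 0 < ω'.areaForm (r - o) w}).Nonempty := by
    obtain ⟨r, hr, htangent⟩ := exists_tangent_point ω' hconv hcpt hne ho
    obtain ⟨q, hq, hneg⟩ := hopp' r hr
    obtain ⟨w, hw⟩ := hBne r hr
    exact ⟨r, hr, w, hw, pos_of_mul_neg_left (hneg w hw) (htangent q hq)⟩
  have hcover : C ⊆ {r | ∃ w ∈ B r, 0 < ω.areaForm (r - o) w} ∪
      {r | ∃ w ∈ B r, 0 < (-ω).areaForm (r - o) w} := by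
    intro r hr
    obtain ⟨q, -, hneg⟩ := hopp r hr
    obtain ⟨w, hw⟩ := hBne r hr
    rcases (left_ne_zero_of_mul (hneg w hw).ne).lt_or_gt with hlt | hgt
    · exact Or.inr ⟨w, hw, by simpa [ω.areaForm_neg_orientation] using hlt⟩
    · exact Or.inl ⟨w, hw, hgt⟩
  obtain ⟨r, hr, ⟨w₁, hw₁, hpos⟩, ⟨w₂, hw₂, hneg⟩⟩ := hconv.isPreconnected _ _
    (isOpen_setOf_exists_areaForm_pos ω hB o) (isOpen_setOf_exists_areaForm_pos (-ω) hB o) hcover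
    (hmeets ω hopp) (hmeets (-ω) (by
      simpa only [ω.areaForm_neg_orientation, LinearMap.neg_apply, neg_mul_neg] using hopp))
  rw [ω.areaForm_neg_orientation, LinearMap.neg_apply, LinearMap.neg_apply, neg_pos] at hneg
  obtain ⟨q, -, hq⟩ := hopp r hr
  exact (neg_of_mul_neg_right (hq w₁ hw₁) hpos.le).not_gt
    (pos_of_mul_neg_right (hq w₂ hw₂) hneg.le)

end AreaForm

section Obstacles

variable {E : Type*} [AddCommGroup E] [Module ℝ E] [TopologicalSpace E]

/-- The translation vectors that carry `C` into a member of `F` other than `C` whose interior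
obstructs the view from `o` to `r`. -/
def blockingShifts (F : Set (Set E)) (C : Set E) (o r : E) : Set E :=
  {w | ∃ D ∈ F, D ≠ C ∧ MapsTo (· + w) C D ∧ ¬ Disjoint (segment ℝ o r) (interior D)}

variable [IsTopologicalAddGroup E] [ContinuousSMul ℝ E]

lemma isOpen_setOf_not_disjoint_segment {U : Set E} (hU : IsOpen U) (o : E) :
    IsOpen {r | ¬ Disjoint (segment ℝ o r) U} := by
  have heq : {r | ¬ Disjoint (segment ℝ o r) U} =
      ⋃ s ∈ Icc (0 : ℝ) 1, (fun r => o + s • (r - o)) ⁻¹' U := by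
    ext r
    simp [segment_eq_image', not_disjoint_iff, and_assoc]
  rw [heq]
  exact isOpen_biUnion fun s _ => hU.preimage (by fun_prop)

lemma isOpen_setOf_mem_blockingShifts (F : Set (Set E)) (C : Set E) (o w : E) :
    IsOpen {r | w ∈ blockingShifts F C o r} := by
  have heq : {r | w ∈ blockingShifts F C o r} =
      ⋃ D ∈ {D | D ∈ F ∧ D ≠ C ∧ MapsTo (· + w) C D},
        {r | ¬ Disjoint (segment ℝ o r) (interior D)} := by
    ext r
    simp only [blockingShifts, mem_ofPred_eq, mem_iUnion, exists_prop, and_assoc]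
  rw [heq]
  exact isOpen_biUnion fun D _ => isOpen_setOf_not_disjoint_segment isOpen_interior o

variable {F : Set (Set E2)} {C : Set E2} {o r : E2}

lemma exists_obstacle_of_notMem_vis (hcl : IsClosed C) (hoC : o ∉ C) (hoV : o ∉ Vis F C)
    (hr : r ∈ C) : ∃ D ∈ F, D ≠ C ∧ ¬ Disjoint (segment ℝ o r) (interior D) := by
  obtain ⟨q, hq, hqr, hvis⟩ := hcl.exists_wbtw_isVisible hr o
  have hqint : q ∉ interior C := fun h => hoC (hvis.eq_of_mem_interior h ▸ hq)
  obtain ⟨D, hDF, hD⟩ : ∃ D ∈ F, ¬ Disjoint (segment ℝ o q) (interior D) := by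
    by_contra! hdis
    exact hoV ⟨q, ⟨subset_closure hq, hqint⟩, hdis⟩
  refine ⟨D, hDF, ?_, fun hdis => hD (hdis.mono_left ?_)⟩
  · rintro rfl
    obtain ⟨y, hy, hyD⟩ := not_disjoint_iff.1 hD
    refine hvis (interior_subset hyD) ⟨mem_segment_iff_wbtw.1 hy, ?_, ?_⟩
    · rintro rfl
      exact hoC (interior_subset hyD)
    · rintro rfl
      exact hqint hyD
  · exact (convex_segment o r).segment_subset (left_mem_segment ℝ o r)
      (mem_segment_iff_wbtw.2 hqr)

open scoped EuclideanSpace in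
lemma add_smul_sub_notMem_of_blockingShifts (ω : Orientation ℝ E2 (Fin 2))
    (hconv : ∀ D ∈ F, Convex ℝ D) (hdisj : F.Pairwise Disjoint) (hC : C ∈ F) (hcl : IsClosed C)
    (ho : o ∉ C) (hr : r ∈ C)
    (h : ∀ q ∈ C, ∃ w ∈ blockingShifts F C o r,
      0 ≤ ω.areaForm (r - o) w * ω.areaForm (r - o) (q - o)) {t : ℝ} (ht : 0 ≤ t) :
    o + t • (o - r) ∉ C ∪ Vis F C := by
  rintro (hmem | ⟨q, hqfr, hvis⟩)
  · exact add_smul_sub_notMem (hconv C hC) ho hr ht hmem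
  · have hq : q ∈ C := hcl.frontier_subset hqfr
    have hro : r - o ≠ 0 := sub_ne_zero.2 fun hro => ho (hro ▸ hr)
    obtain ⟨w, ⟨D, hDF, hDC, hw, hblock⟩, hside⟩ := h q hq
    obtain ⟨k, α, β, hk, hβ, hkβ, hrel⟩ := exists_smul_eq_sub_of_areaForm_mul_nonneg ω hro hside
    exact not_disjoint_opposite_ray_segment_interior (hconv C hC) (hconv D hDF)
      (hdisj hC hDF hDC.symm) hr hq (hw hq) hblock hk hβ hkβ hrel ht (hvis D hDF)

end Obstacles

open scoped EuclideanSpace in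
theorem escape_ray_for_translates_general (F : Set (Set E2)) (hconv : ∀ D ∈ F, Convex ℝ D)
    (hdisj : F.Pairwise Disjoint) (C : Set E2) (hC : C ∈ F) (hcpt : IsCompact C)
    (hne : C.Nonempty) (hshift : ∀ D ∈ F, ∃ w : E2, MapsTo (· + w) C D)
    (o : E2) (ho : o ∉ C ∪ Vis F C) :
    ∃ v : E2, v ≠ 0 ∧ ∀ t : ℝ, 0 ≤ t → o + t • v ∉ C ∪ Vis F C := by
  rw [mem_union, not_or] at ho
  obtain ⟨hoC, hoV⟩ := ho
  have hblocked : ∀ r ∈ C, (blockingShifts F C o r).Nonempty := fun r hr => by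
    obtain ⟨D, hDF, hDC, hblock⟩ := exists_obstacle_of_notMem_vis hcpt.isClosed hoC hoV hr
    obtain ⟨w, hw⟩ := hshift D hDF
    exact ⟨w, D, hDF, hDC, hw, hblock⟩
  let ω := (EuclideanSpace.basisFun (Fin 2) ℝ).toBasis.orientation
  obtain ⟨r, hr, hside⟩ := exists_forall_exists_areaForm_mul_nonneg ω (hconv C hC) hcpt hne hoC
    hblocked (isOpen_setOf_mem_blockingShifts F C o)
  exact ⟨o - r, sub_ne_zero.2 fun hor => hoC (hor ▸ hr), fun t ht =>
    add_smul_sub_notMem_of_blockingShifts ω hconv hdisj hC hcpt.isClosed hoC hr hside ht⟩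

lemma IsConvexBody.of_eq_translate {C₀ D : Set E2} (h : IsConvexBody C₀)
    (hD : ∃ w : E2, D = (fun x => x + w) '' C₀) : IsConvexBody D := by
  obtain ⟨w, rfl⟩ := hD
  obtain ⟨hconv, hcpt, hint⟩ := h
  refine ⟨?_, hcpt.image (continuous_add_const w), ?_⟩
  · simpa only [add_comm] using hconv.translate w
  · exact (hint.image _).mono ((isOpenMap_add_right w).image_interior_subset C₀)

lemma exists_mapsTo_add_of_eq_translate {G : Type*} [AddCommGroup G] {C₀ C D : Set G}
    (hC : ∃ v : G, C = (fun x => x + v) '' C₀) (hD : ∃ w : G, D = (fun x => x + w) '' C₀) :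
    ∃ w : G, MapsTo (· + w) C D := by
  obtain ⟨v, rfl⟩ := hC
  obtain ⟨w, rfl⟩ := hD
  refine ⟨w - v, ?_⟩
  rintro _ ⟨x, hx, rfl⟩
  exact ⟨x, hx, by simp only; abel⟩

/-- For a finite family `F` of pairwise disjoint translates of a convex body and
`C ∈ F`, every point `o ∉ C ∪ V(C)` admits a ray emanating from `o` that is
disjoint from `C ∪ V(C)`. -/
theorem escape_ray_for_translates
    (C₀ : Set E2) (hC₀ : IsConvexBody C₀)
    (F : Set (Set E2)) (hfin : F.Finite)
    (htr : ∀ D ∈ F, ∃ w : E2, D = (fun x => x + w) '' C₀)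
    (hdisj : F.Pairwise Disjoint)
    (C : Set E2) (hC : C ∈ F)
    (o : E2) (ho : o ∉ C ∪ Vis F C) :
    ∃ v : E2, v ≠ 0 ∧ ∀ t : ℝ, 0 ≤ t → o + t • v ∉ C ∪ Vis F C := by
  have hbody := fun D hD => hC₀.of_eq_translate (htr D hD)
  exact escape_ray_for_translates_general F (fun D hD => (hbody D hD).1) hdisj C hC (hbody C hC).2.1
    ((hbody C hC).2.2.mono interior_subset)
    (fun D hD => exists_mapsTo_add_of_eq_translate (htr C hC) (htr D hD)) o ho

end
end
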